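/- Let N be a positive integer and let g : (0,∞) → (0,∞) be twice continuously differentiable with g'(r) > 0 for all r > 0 and with range (0,∞); let f = g^{-1} be its inverse. Define X : ℝ^N \ {0} → ℝ^N by X(x) = (g(‖x‖)/‖x‖) x. Then for every x ≠ 0, writing R = ‖X(x)‖ = g(‖x‖), the coefficients of the transformed Laplacian satisfy, for all i, j ∈ {1,…,N}: ΔX_i(x) = [−f''(R)/(f'(R)³ R) + ((N−1)/(R f'(R))) · (f(R) − R f'(R))/f(R)²] · X_i(x), and ∇X_i(x) · ∇X_j(x) = (1/(f'(R)² R²) − 1/f(R)²) X_i(x) X_j(x) + δ_{ij} R²/f(R)², where (f(R) − R f'(R))/f(R)² is the derivative at R of the function S ↦ S/f(S), Δ and ∇ are taken with respect to x, and δ_{ij} is the Kronecker delta. -/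

import Mathlib

/-!
With `h r = g r / r` one has `X_i = h(‖x‖) x_i`. Writing `h' r = r * k r`, the gradient of
`y ↦ h ‖y‖` at `x ≠ 0` is `k(‖x‖) x`, so `∂_l X_i = k x_l x_i + h δ_{li}`
(`pdE_radial_mul_coord`). Summing products of these over `l`, and differentiating once more, gives
`∇X_i · ∇X_j = (k² r² + 2 h k) x_i x_j + h² δ_{ij}` and `ΔX_i = (r k' + (N + 2) k) x_i` with
`r = ‖x‖` (`sum_pdE_mul_pdE_radial`, `lapE_radial_mul_coord`). The formulas in terms of `f` follow
from the inverse function rule, `f'(g r) = 1 / g' r` and `f''(g r) = -g'' r / (g' r)³`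
(`hasDerivAt_inverse`, `deriv_deriv_inverse`).
-/

/-- Partial derivative of a real-valued function on Euclidean space along the
`i`-th coordinate direction. -/
noncomputable def pdE {N : ℕ} (f : EuclideanSpace ℝ (Fin N) → ℝ) (i : Fin N)
    (x : EuclideanSpace ℝ (Fin N)) : ℝ :=
  fderiv ℝ f x (EuclideanSpace.single i (1 : ℝ))

/-- The Laplacian of a real-valued function on Euclidean space. -/
noncomputable def lapE {N : ℕ} (f : EuclideanSpace ℝ (Fin N) → ℝ)
    (x : EuclideanSpace ℝ (Fin N)) : ℝ :=
  ∑ i : Fin N, pdE (fun y => pdE f i y) i x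

open Filter Topology

lemma hasFDerivAt_radial {N : ℕ} {h : ℝ → ℝ} {c : ℝ} {x : EuclideanSpace ℝ (Fin N)}
    (hx : x ≠ 0) (hh : HasDerivAt h (‖x‖ * c) ‖x‖) :
    HasFDerivAt (fun y : EuclideanSpace ℝ (Fin N) => h ‖y‖) (c • innerSL ℝ x) x := by
  have hn : ‖x‖ ≠ 0 := norm_ne_zero_iff.2 hx
  have h1 : HasFDerivAt (fun y : EuclideanSpace ℝ (Fin N) => ‖y‖) (‖x‖⁻¹ • innerSL ℝ x) x := by
    have h2 := (hasStrictFDerivAt_norm_sq x).hasFDerivAt.sqrt (pow_ne_zero 2 hn)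
    simp only [Real.sqrt_sq (norm_nonneg _)] at h2
    refine h2.congr_fderiv ?_
    ext v
    simp
    field_simp
  refine (hh.comp_hasFDerivAt x h1).congr_fderiv ?_
  rw [smul_smul]
  congr 1
  field_simp

lemma hasFDerivAt_coord {N : ℕ} (i : Fin N) (x : EuclideanSpace ℝ (Fin N)) :
    HasFDerivAt (fun y : EuclideanSpace ℝ (Fin N) => y i)
      (EuclideanSpace.proj i : EuclideanSpace ℝ (Fin N) →L[ℝ] ℝ) x :=
  (EuclideanSpace.proj i : EuclideanSpace ℝ (Fin N) →L[ℝ] ℝ).hasFDerivAt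

lemma pdE_radial_mul_coord {N : ℕ} {h : ℝ → ℝ} {c : ℝ} {x : EuclideanSpace ℝ (Fin N)}
    (hx : x ≠ 0) (hh : HasDerivAt h (‖x‖ * c) ‖x‖) (i l : Fin N) :
    pdE (fun y => h ‖y‖ * y i) l x = c * x l * x i + h ‖x‖ * (if i = l then 1 else 0) := by
  rw [pdE, ((hasFDerivAt_radial hx hh).fun_mul (hasFDerivAt_coord i x)).fderiv]
  simp [EuclideanSpace.inner_single_right]
  ring

lemma pdE_congr {N : ℕ} {u v : EuclideanSpace ℝ (Fin N) → ℝ} {x : EuclideanSpace ℝ (Fin N)}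
    (huv : u =ᶠ[𝓝 x] v) (l : Fin N) : pdE u l x = pdE v l x := by
  rw [pdE, pdE, huv.fderiv_eq]

lemma sum_sq_coord {N : ℕ} (x : EuclideanSpace ℝ (Fin N)) : ∑ l, x l ^ 2 = ‖x‖ ^ 2 := by
  simp [EuclideanSpace.norm_sq_eq]

lemma sum_pdE_mul_pdE_radial {N : ℕ} {h : ℝ → ℝ} {c : ℝ} {x : EuclideanSpace ℝ (Fin N)}
    (hx : x ≠ 0) (hh : HasDerivAt h (‖x‖ * c) ‖x‖) (i j : Fin N) :
    ∑ l, pdE (fun y => h ‖y‖ * y i) l x * pdE (fun y => h ‖y‖ * y j) l x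
      = (c ^ 2 * ‖x‖ ^ 2 + 2 * h ‖x‖ * c) * x i * x j
        + h ‖x‖ ^ 2 * (if i = j then 1 else 0) := by
  simp only [pdE_radial_mul_coord hx hh]
  have key : ∀ l, (c * x l * x i + h ‖x‖ * (if i = l then 1 else 0))
        * (c * x l * x j + h ‖x‖ * (if j = l then 1 else 0))
      = c ^ 2 * x i * x j * x l ^ 2 + (if j = l then c * h ‖x‖ * x i * x l else 0)
        + (if i = l then c * h ‖x‖ * x j * x l else 0)
        + (if i = l then h ‖x‖ ^ 2 * (if j = l then 1 else 0) else 0) := by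
    intro l
    split_ifs <;> ring
  simp only [key, Finset.sum_add_distrib, ← Finset.mul_sum, sum_sq_coord, Finset.sum_ite_eq,
    Finset.mem_univ, if_true, eq_comm (a := j) (b := i)]
  ring

lemma lapE_radial_mul_coord {N : ℕ} {h k : ℝ → ℝ} {k' : ℝ} {x : EuclideanSpace ℝ (Fin N)}
    (hx : x ≠ 0) (hh : ∀ r > 0, HasDerivAt h (r * k r) r) (hk : HasDerivAt k k' ‖x‖)
    (i : Fin N) :
    lapE (fun y => h ‖y‖ * y i) x = (‖x‖ * k' + (N + 2) * k ‖x‖) * x i := by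
  have hpos : 0 < ‖x‖ := norm_pos_iff.2 hx
  have hk2 : HasDerivAt k (‖x‖ * (k' / ‖x‖)) ‖x‖ := by
    convert hk using 1
    field_simp
  have key : ∀ l, pdE (fun y => pdE (fun z => h ‖z‖ * z i) l y) l x
      = k' / ‖x‖ * x i * x l ^ 2 + k ‖x‖ * x i + (if i = l then 2 * k ‖x‖ * x l else 0) := by
    intro l
    have hev : (fun y => pdE (fun z => h ‖z‖ * z i) l y) =ᶠ[𝓝 x]
        fun y => k ‖y‖ * y l * y i + h ‖y‖ * (if i = l then 1 else 0) := by
      filter_upwards [isOpen_ne.mem_nhds hx] with y hy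
      exact pdE_radial_mul_coord hy (hh _ (norm_pos_iff.2 hy)) i l
    rw [pdE_congr hev, pdE, ((((hasFDerivAt_radial hx hk2).fun_mul (hasFDerivAt_coord l x)).fun_mul
      (hasFDerivAt_coord i x)).fun_add
      ((hasFDerivAt_radial hx (hh _ hpos)).mul_const (if i = l then (1 : ℝ) else 0))).fderiv]
    split_ifs with hil
    · subst hil
      simp [EuclideanSpace.inner_single_right]
      ring
    · simp [EuclideanSpace.inner_single_right, hil]
      ring
  simp only [lapE, key, Finset.sum_add_distrib, ← Finset.mul_sum, sum_sq_coord, Finset.sum_ite_eq,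
    Finset.mem_univ, if_true, Finset.sum_const, Finset.card_univ, Fintype.card_fin, nsmul_eq_mul]
  field_simp
  ring

/-- Continuity of `f` is not assumed: it comes from the strict inverse function theorem for `g`. -/
lemma hasDerivAt_inverse {g f : ℝ → ℝ} (hg : ContDiffOn ℝ 2 g (Set.Ioi 0))
    (hg' : ∀ r > (0 : ℝ), 0 < deriv g r) (hfg : ∀ r > (0 : ℝ), f (g r) = r)
    {r : ℝ} (hr : 0 < r) : HasDerivAt f (deriv g r)⁻¹ (g r) := by
  have hs : HasStrictDerivAt g (deriv g r) r :=
    (hg.contDiffAt (Ioi_mem_nhds hr)).hasStrictDerivAt (by norm_num)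
  refine (hs.to_local_left_inverse (hg' r hr).ne' ?_).hasDerivAt
  filter_upwards [Ioi_mem_nhds hr] with s hs using hfg s hs

lemma deriv_deriv_inverse {g f : ℝ → ℝ} (hg : ContDiffOn ℝ 2 g (Set.Ioi 0))
    (hg' : ∀ r > (0 : ℝ), 0 < deriv g r) (hgpos : ∀ r > (0 : ℝ), 0 < g r)
    (hgsurj : ∀ R > (0 : ℝ), ∃ r > (0 : ℝ), g r = R) (hfg : ∀ r > (0 : ℝ), f (g r) = r)
    {r a : ℝ} (hr : 0 < r) (ha : HasDerivAt (deriv g) a r) :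
    deriv (deriv f) (g r) = -a / deriv g r ^ 3 := by
  have hev : deriv f =ᶠ[𝓝 (g r)] fun S => (deriv g (f S))⁻¹ := by
    filter_upwards [Ioi_mem_nhds (hgpos r hr)] with S hS
    obtain ⟨s, hs, rfl⟩ := hgsurj S hS
    rw [hfg s hs, (hasDerivAt_inverse hg hg' hfg hs).deriv]
  have hne : deriv g r ≠ 0 := (hg' r hr).ne'
  have ha' : HasDerivAt (deriv g) a (f (g r)) := by rwa [hfg r hr]
  have hne' : deriv g (f (g r)) ≠ 0 := by rwa [hfg r hr]
  have h1 := (ha'.comp (g r) (hasDerivAt_inverse hg hg' hfg hr)).inv hne'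
  rw [hev.deriv_eq]
  refine h1.deriv.trans ?_
  simp only [Function.comp, hfg r hr]
  field_simp

/-- For the radially-scaled change of coordinates `X(x) = (g(‖x‖)/‖x‖) x` with
`g : (0,∞) → (0,∞)` increasing with inverse `f = g⁻¹`, the coefficients of the
transformed Laplacian, expressed in the new radial variable `R = ‖X(x)‖ = g(‖x‖)`,
are `ΔX_i = [−f''(R)/(f'(R)³R) + ((N−1)/(Rf'(R)))·(f(R) − Rf'(R))/f(R)²] X_i` and
`∇X_i · ∇X_j = (1/(f'(R)²R²) − 1/f(R)²) X_i X_j + δ_{ij} R²/f(R)²`. -/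
theorem radial_coords_inverse_form (N : ℕ) (hN : 0 < N)
    (g f : ℝ → ℝ) (hg : ContDiffOn ℝ 2 g (Set.Ioi 0))
    (hg' : ∀ r > (0 : ℝ), 0 < deriv g r)
    (hgpos : ∀ r > (0 : ℝ), 0 < g r)
    (hgsurj : ∀ R > (0 : ℝ), ∃ r > (0 : ℝ), g r = R)
    (hfg : ∀ r > (0 : ℝ), f (g r) = r)
    (hgf : ∀ R > (0 : ℝ), g (f R) = R)
    (X : EuclideanSpace ℝ (Fin N) → EuclideanSpace ℝ (Fin N))
    (hX : ∀ x : EuclideanSpace ℝ (Fin N), x ≠ 0 → X x = (g ‖x‖ / ‖x‖) • x) :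
    ∀ x : EuclideanSpace ℝ (Fin N), x ≠ 0 →
      ‖X x‖ = g ‖x‖
      ∧ (∀ i : Fin N,
          lapE (fun y => X y i) x
            = (-(deriv (deriv f) (g ‖x‖)) / ((deriv f (g ‖x‖)) ^ 3 * g ‖x‖)
                + (((N : ℝ) - 1) / (g ‖x‖ * deriv f (g ‖x‖)))
                  * ((f (g ‖x‖) - g ‖x‖ * deriv f (g ‖x‖)) / (f (g ‖x‖)) ^ 2))
              * X x i)
      ∧ (∀ i j : Fin N,
          (∑ l : Fin N, pdE (fun y => X y i) l x * pdE (fun y => X y j) l x)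
            = (1 / ((deriv f (g ‖x‖)) ^ 2 * (g ‖x‖) ^ 2) - 1 / (f (g ‖x‖)) ^ 2)
                * X x i * X x j
              + (if i = j then 1 else 0) * (g ‖x‖) ^ 2 / (f (g ‖x‖)) ^ 2) := by
  intro x hx
  have hr : 0 < ‖x‖ := norm_pos_iff.2 hx
  have hR := hgpos _ hr
  have hd := hg' _ hr
  have hgd : ∀ r > 0, HasDerivAt g (deriv g r) r := fun r h0 =>
    ((hg.contDiffAt (Ioi_mem_nhds h0)).differentiableAt (by norm_num)).hasDerivAt
  obtain ⟨a, ha⟩ : ∃ a, HasDerivAt (deriv g) a ‖x‖ := by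
    have h1 : ContDiffOn ℝ 1 (deriv g) (Set.Ioi 0) :=
      hg.deriv_of_isOpen isOpen_Ioi (by norm_num)
    exact ⟨_, ((h1.contDiffAt (Ioi_mem_nhds hr)).differentiableAt (by norm_num)).hasDerivAt⟩
  have hf1 : deriv f (g ‖x‖) = (deriv g ‖x‖)⁻¹ := (hasDerivAt_inverse hg hg' hfg hr).deriv
  have hf2 := deriv_deriv_inverse hg hg' hgpos hgsurj hfg hr ha
  have hf0 := hfg _ hr
  have hXi : ∀ i, X x i = g ‖x‖ / ‖x‖ * x i := fun i => by simp [hX x hx]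
  let h : ℝ → ℝ := fun r => g r / r
  let k : ℝ → ℝ := fun r => (deriv g r * r - g r) / r ^ 3
  have hh : ∀ r > 0, HasDerivAt h (r * k r) r := by
    intro r h0
    refine ((hgd r h0).div (hasDerivAt_id' r) h0.ne').congr_deriv ?_
    simp only [k]
    field_simp
  have hk : HasDerivAt k (a / ‖x‖ ^ 2 - 3 * (deriv g ‖x‖ * ‖x‖ - g ‖x‖) / ‖x‖ ^ 4) ‖x‖ := by
    refine (((ha.mul (hasDerivAt_id' ‖x‖)).sub (hgd _ hr)).div (hasDerivAt_pow 3 ‖x‖)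
      (pow_ne_zero 3 hr.ne')).congr_deriv ?_
    simp only [Pi.sub_apply, Pi.mul_apply]
    field_simp
    ring
  -- `X` is prescribed only off the origin, so coordinate functions agree near `y ≠ 0` only.
  have hXev : ∀ i, ∀ y : EuclideanSpace ℝ (Fin N), y ≠ 0 →
      (fun z => X z i) =ᶠ[𝓝 y] fun z => h ‖z‖ * z i := by
    intro i y hy
    filter_upwards [isOpen_ne.mem_nhds hy] with z hz
    simp [hX z hz, h]
  refine ⟨?_, fun i => ?_, fun i j => ?_⟩
  · rw [hX x hx, norm_smul, Real.norm_of_nonneg (div_nonneg hR.le hr.le)]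
    field_simp
  · have hlap : lapE (fun y => X y i) x = lapE (fun y => h ‖y‖ * y i) x := by
      refine Finset.sum_congr rfl fun l _ => pdE_congr ?_ l
      filter_upwards [isOpen_ne.mem_nhds hx] with y hy
      exact pdE_congr (hXev i y hy) l
    rw [hlap, lapE_radial_mul_coord hx hh hk, hXi, hf0, hf1, hf2]
    simp only [k]
    field_simp
    ring
  · simp only [pdE_congr (hXev _ x hx)]
    rw [sum_pdE_mul_pdE_radial hx (hh _ hr), hXi, hXi, hf0, hf1]
    simp only [h, k]
    field_simp
    ring
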